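/- Let θ = 1/√5. Although ℤ + ℤθ is not a subring of ℝ, one has IM_+(ℤ + ℤ(1/√5)) = {(2 + √5)^n : n ∈ ℤ}. -/

import Mathlib

/-- The positive inner multiplier group of an additive subgroup `E` of `ℝ`:
`IM₊(E) = {t > 0 | t ∈ E, t⁻¹ ∈ E, tE = E}`. -/
def IMplus (E : AddSubgroup ℝ) : Set ℝ :=
  {t : ℝ | 0 < t ∧ t ∈ E ∧ t⁻¹ ∈ E ∧ (fun x => t * x) '' (E : Set ℝ) = (E : Set ℝ)}

/-- The additive subgroup `ℤ + ℤθ = {a + bθ : a, b ∈ ℤ}` of `ℝ`. -/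
def zTheta (θ : ℝ) : AddSubgroup ℝ where
  carrier := {x : ℝ | ∃ a b : ℤ, x = (a : ℝ) + (b : ℝ) * θ}
  zero_mem' := ⟨0, 0, by push_cast; ring⟩
  add_mem' := by
    rintro x y ⟨a, b, rfl⟩ ⟨c, d, rfl⟩
    exact ⟨a + c, b + d, by push_cast; ring⟩
  neg_mem' := by
    rintro x ⟨a, b, rfl⟩
    exact ⟨-a, -b, by push_cast; ring⟩

/-!
The multipliers of `E = ℤ + ℤ/√d`, the reals `t` with `tE ⊆ E`, form the ring `ℤ[√d]` even though
`E` itself is not a ring, so `IM₊(E)` is the group of positive units of `ℤ[√d]`. By the Archimedean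
property this group is generated by the least unit exceeding `1`, if there is one. A unit
`x + y√d > 1` has `x, y ≥ 1`, because its conjugate has absolute value less than `1`; for `d = 5`
the norm equation `x² - 5y² = ±1` then forces `x ≥ 2`, so the least such unit is `2 + √5`.
-/

/-- The multiplier ring `{t | tE ⊆ E}` of an additive subgroup `E` of `ℝ`. Unlike for
`IMplus`, neither `t ∈ E` nor equality `tE = E` is asked. -/
def multiplierRing (E : AddSubgroup ℝ) : Subring ℝ where
  carrier := {t | ∀ x ∈ E, t * x ∈ E}
  mul_mem' {s t} hs ht x hx := by
    rw [mul_assoc]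
    exact hs _ (ht x hx)
  one_mem' x hx := by rwa [one_mul]
  add_mem' {s t} hs ht x hx := by
    rw [add_mul]
    exact E.add_mem (hs x hx) (ht x hx)
  zero_mem' x _ := by
    rw [zero_mul]
    exact E.zero_mem
  neg_mem' {t} ht x hx := by
    rw [neg_mul]
    exact E.neg_mem (ht x hx)

lemma mem_multiplierRing {E : AddSubgroup ℝ} {t : ℝ} :
    t ∈ multiplierRing E ↔ ∀ x ∈ E, t * x ∈ E :=
  Iff.rfl

lemma mem_IMplus_iff {E : AddSubgroup ℝ} (hE : 1 ∈ E) {t : ℝ} :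
    t ∈ IMplus E ↔ 0 < t ∧ t ∈ multiplierRing E ∧ t⁻¹ ∈ multiplierRing E := by
  constructor
  · rintro ⟨ht, -, -, himage⟩
    refine ⟨ht, fun x hx ↦ himage.subset ⟨x, hx, rfl⟩, fun x hx ↦ ?_⟩
    obtain ⟨y, hy, rfl⟩ := himage.superset hx
    rwa [inv_mul_cancel_left₀ ht.ne']
  · rintro ⟨ht, hmul, hinv⟩
    refine ⟨ht, ?_, ?_, Set.Subset.antisymm ?_ fun x hx ↦ ?_⟩
    · simpa only [mul_one] using hmul 1 hE
    · simpa only [mul_one] using hinv 1 hE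
    · rintro _ ⟨x, hx, rfl⟩
      exact hmul x hx
    · exact ⟨t⁻¹ * x, hinv x hx, mul_inv_cancel_left₀ ht.ne' x⟩

lemma one_mem_zTheta (θ : ℝ) : 1 ∈ zTheta θ :=
  ⟨1, 0, by simp⟩

lemma self_mem_zTheta (θ : ℝ) : θ ∈ zTheta θ :=
  ⟨0, 1, by simp⟩

lemma mem_multiplierRing_zTheta {θ t : ℝ} :
    t ∈ multiplierRing (zTheta θ) ↔ t ∈ zTheta θ ∧ t * θ ∈ zTheta θ := by
  refine ⟨fun h ↦ ⟨?_, h θ (self_mem_zTheta θ)⟩, ?_⟩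
  · simpa only [mul_one] using h 1 (one_mem_zTheta θ)
  · rintro ⟨ht, htθ⟩ _ ⟨a, b, rfl⟩
    have hsplit : t * (a + b * θ) = a • t + b • (t * θ) := by
      simp only [zsmul_eq_mul]
      ring
    rw [hsplit]
    exact add_mem (zsmul_mem ht a) (zsmul_mem htθ b)

lemma exists_zpow_eq_of_minimal_one_lt {G K : Type*} [Group G] [Field K] [LinearOrder K]
    [IsStrictOrderedRing K] [Archimedean K] (f : G →* K) {ε : G} (hε : 1 < f ε)
    (hmin : ∀ g, 1 < f g → f ε ≤ f g) {g : G} (hg : 0 < f g) : ∃ n : ℤ, f g = f ε ^ n := by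
  obtain ⟨n, hle, hlt⟩ := exists_mem_Ico_zpow hg hε
  have hpow : 0 < f ε ^ n := zpow_pos (one_pos.trans hε) n
  have hquot : f (g / ε ^ n) = f g / f ε ^ n := by rw [map_div, map_zpow]
  have hquot_lt : f (g / ε ^ n) < f ε := by
    rwa [hquot, div_lt_iff₀ hpow, ← zpow_one_add₀ (one_pos.trans hε).ne', add_comm]
  have hquot_le : f (g / ε ^ n) ≤ 1 := not_lt.mp fun h ↦ (hmin _ h).not_gt hquot_lt
  rw [hquot, div_le_one hpow] at hquot_le
  exact ⟨n, hquot_le.antisymm hle⟩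

section Zsqrtd

open Zsqrtd

variable {d : ℤ} (h0 : 0 ≤ d)

lemma toReal_sqrtd : toReal h0 sqrtd = √d := by
  simp

lemma toReal_mul_toReal_star (z : ℤ√d) : toReal h0 z * toReal h0 (star z) = z.norm := by
  rw [← map_mul, ← norm_eq_mul_conj, map_intCast]

lemma abs_norm_unit (u : (ℤ√d)ˣ) : |(u : ℤ√d).norm| = 1 :=
  Int.isUnit_iff_abs_eq.mp ((isUnit_iff_norm_isUnit _).mp u.isUnit)

lemma re_pos_and_im_pos_of_one_lt_toReal {u : (ℤ√d)ˣ} (hu : 1 < toReal h0 u) :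
    0 < (u : ℤ√d).re ∧ 0 < (u : ℤ√d).im := by
  have hnorm : |toReal h0 u * toReal h0 (star (u : ℤ√d))| = 1 := by
    rw [toReal_mul_toReal_star, ← Int.cast_abs, abs_norm_unit, Int.cast_one]
  have hconj : |toReal h0 (star (u : ℤ√d))| < 1 := by
    rw [abs_mul, abs_of_pos (one_pos.trans hu)] at hnorm
    rw [eq_inv_of_mul_eq_one_right hnorm]
    exact inv_lt_one_of_one_lt₀ hu
  obtain ⟨hlower, hupper⟩ := abs_lt.mp hconj
  simp only [toReal_apply, re_star, im_star, Int.cast_neg] at hu hlower hupper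
  have him : (0 : ℝ) < (u : ℤ√d).im * √d := by linarith
  constructor
  · have hre : (0 : ℝ) < (u : ℤ√d).re := by linarith
    exact_mod_cast hre
  · exact_mod_cast pos_of_mul_pos_left him (Real.sqrt_nonneg _)

/-- `ε` is the fundamental unit of `ℤ[√d]`: the least unit exceeding `1` in the embedding into `ℝ`
that sends `√d` to the positive root. Its norm may be `1` or `-1`, in contrast to
`Pell.IsFundamental`. -/
def IsFundamentalUnit (ε : (ℤ√d)ˣ) : Prop :=
  1 < toReal h0 ε ∧ ∀ u : (ℤ√d)ˣ, 1 < toReal h0 u → toReal h0 ε ≤ toReal h0 u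

lemma pos_and_exists_unit_iff_exists_zpow {ε : (ℤ√d)ˣ} (hε : IsFundamentalUnit h0 ε) {t : ℝ} :
    (0 < t ∧ ∃ u : (ℤ√d)ˣ, toReal h0 u = t) ↔ ∃ n : ℤ, t = toReal h0 ε ^ n := by
  let f : (ℤ√d)ˣ →* ℝ := (toReal h0 : ℤ√d →* ℝ).comp (Units.coeHom _)
  constructor
  · rintro ⟨ht, u, rfl⟩
    exact exists_zpow_eq_of_minimal_one_lt f hε.1 hε.2 ht
  · rintro ⟨n, rfl⟩
    exact ⟨zpow_pos (one_pos.trans hε.1) n, ε ^ n, map_zpow f ε n⟩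

lemma multiplierRing_zTheta_inv_sqrt (hpos : 0 < d) :
    multiplierRing (zTheta (1 / √d)) = (toReal hpos.le).range := by
  have hsqrt : √d ≠ 0 := Real.sqrt_ne_zero'.mpr (by exact_mod_cast hpos)
  have hsq : √d ^ 2 = d := Real.sq_sqrt (by exact_mod_cast hpos.le)
  ext t
  rw [mem_multiplierRing_zTheta, RingHom.mem_range]
  constructor
  · rintro ⟨-, a, b, htθ⟩
    refine ⟨⟨b, a⟩, ?_⟩
    field_simp at htθ
    rw [toReal_apply]
    linarith
  · rintro ⟨⟨x, y⟩, rfl⟩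
    refine ⟨⟨x, d * y, ?_⟩, ⟨y, x, ?_⟩⟩
    · rw [toReal_apply]
      push_cast
      field_simp
      linear_combination (y : ℝ) * hsq
    · rw [toReal_apply]
      field_simp
      ring

section Nonsquare

variable (hd : ¬IsSquare d)
include hd

include h0 in
lemma pos_of_nonneg_of_not_isSquare : 0 < d :=
  h0.lt_of_ne fun h ↦ hd (h ▸ IsSquare.zero)

lemma toReal_injective_of_not_isSquare : Function.Injective (toReal h0) :=
  toReal_injective h0 fun n hn ↦ hd ⟨n, hn⟩

lemma inv_sqrt_notMem_range_toReal : 1 / √d ∉ (toReal h0).range := by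
  rintro ⟨z, hz⟩
  have hsqrt : √d ≠ 0 := Real.sqrt_ne_zero'.mpr <| by
    exact_mod_cast pos_of_nonneg_of_not_isSquare h0 hd
  have hmul : sqrtd * z = 1 := toReal_injective_of_not_isSquare h0 hd <| by
    rw [map_mul, toReal_sqrtd, hz, map_one, mul_one_div_cancel hsqrt]
  have hre : d * z.im = 1 := by simpa using congrArg re hmul
  obtain rfl : d = 1 := Int.eq_one_of_mul_eq_one_right h0 hre
  exact hd IsSquare.one

lemma mem_IMplus_zTheta_inv_sqrt_iff {t : ℝ} :
    t ∈ IMplus (zTheta (1 / √d)) ↔ 0 < t ∧ ∃ u : (ℤ√d)ˣ, toReal h0 u = t := by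
  have hpos := pos_of_nonneg_of_not_isSquare h0 hd
  rw [mem_IMplus_iff (one_mem_zTheta _), multiplierRing_zTheta_inv_sqrt hpos]
  refine and_congr_right fun ht ↦ ⟨?_, ?_⟩
  · rintro ⟨⟨z, rfl⟩, ⟨w, hw⟩⟩
    have hzw : z * w = 1 := toReal_injective_of_not_isSquare h0 hd <| by
      rw [map_mul, hw, map_one, mul_inv_cancel₀ ht.ne']
    exact ⟨Units.mkOfMulEqOne z w hzw, rfl⟩
  · rintro ⟨u, rfl⟩
    refine ⟨⟨u, rfl⟩, ⟨↑u⁻¹, eq_inv_of_mul_eq_one_left ?_⟩⟩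
    rw [← map_mul, Units.inv_mul, map_one]

theorem IMplus_zTheta_inv_sqrt5_general {ε : (ℤ√d)ˣ} (hε : IsFundamentalUnit h0 ε) :
    (¬ ∀ x ∈ zTheta (1 / √d), ∀ y ∈ zTheta (1 / √d), x * y ∈ zTheta (1 / √d)) ∧
    IMplus (zTheta (1 / √d)) = {x : ℝ | ∃ n : ℤ, x = toReal h0 ε ^ n} := by
  refine ⟨fun hclosed ↦ inv_sqrt_notMem_range_toReal h0 hd ?_, ?_⟩
  · have hpos := pos_of_nonneg_of_not_isSquare h0 hd
    rw [← multiplierRing_zTheta_inv_sqrt hpos, mem_multiplierRing]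
    exact hclosed _ (self_mem_zTheta _)
  · exact Set.ext fun _ ↦
      (mem_IMplus_zTheta_inv_sqrt_iff h0 hd).trans (pos_and_exists_unit_iff_exists_zpow h0 hε)

end Nonsquare

/-- The unit `2 + √5` of `ℤ[√5]`, with inverse `-2 + √5`. -/
def twoAddSqrtFive : (ℤ√5)ˣ where
  val := ⟨2, 1⟩
  inv := ⟨-2, 1⟩
  val_inv := rfl
  inv_val := rfl

lemma toReal_twoAddSqrtFive (h0 : (0 : ℤ) ≤ 5) : toReal h0 twoAddSqrtFive = 2 + √5 := by
  simp [twoAddSqrtFive]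

lemma isFundamentalUnit_twoAddSqrtFive (h0 : (0 : ℤ) ≤ 5) :
    IsFundamentalUnit h0 twoAddSqrtFive := by
  rw [IsFundamentalUnit, toReal_twoAddSqrtFive]
  refine ⟨by linarith [Real.sqrt_nonneg 5], fun u hu ↦ ?_⟩
  obtain ⟨hre, him⟩ := re_pos_and_im_pos_of_one_lt_toReal h0 hu
  have hnorm : -1 ≤ (u : ℤ√5).norm := (abs_le.mp (abs_norm_unit u).le).1
  rw [norm_def] at hnorm
  have him_one : (1 : ℤ) ≤ (u : ℤ√5).im := him
  have hre_sq : (2 : ℤ) ^ 2 ≤ (u : ℤ√5).re ^ 2 := by nlinarith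
  have hre_two : (2 : ℤ) ≤ (u : ℤ√5).re := (sq_le_sq₀ zero_le_two hre.le).mp hre_sq
  calc 2 + √5 = (2 : ℤ) + (1 : ℤ) * √5 := by norm_num
    _ ≤ (u : ℤ√5).re + (u : ℤ√5).im * √5 := by gcongr
    _ = toReal h0 u := by simp

end Zsqrtd

/-- `ℤ + ℤ(1/√5)` is not closed under multiplication (hence not a
subring of `ℝ`), yet `IM₊(ℤ + ℤ(1/√5))` is the infinite cyclic group generated by
`2 + √5`. -/
theorem IMplus_zTheta_inv_sqrt5 :
    (¬ ∀ x ∈ zTheta (1 / Real.sqrt 5), ∀ y ∈ zTheta (1 / Real.sqrt 5),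
      x * y ∈ zTheta (1 / Real.sqrt 5)) ∧
    IMplus (zTheta (1 / Real.sqrt 5)) =
      {x : ℝ | ∃ n : ℤ, x = (2 + Real.sqrt 5) ^ n} := by
  simpa only [Int.cast_ofNat, toReal_twoAddSqrtFive (by decide)] using
    IMplus_zTheta_inv_sqrt5_general (by decide) (by norm_num) (isFundamentalUnit_twoAddSqrtFive _)
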